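/- Let k ≥ 2 be an integer and m a nonnegative integer. Define the normalized integral A_k(m) = ((2m + k − 1)! / (m! · (2m + k − 1)! · (k/2)_m)) · (k/(2(k − 1)))^m · ∫_{[0,∞)^k} (e₂(x))^m e^{−e₁(x)} dx, i.e., A_k(m) = (1/(m! · (k/2)_m)) · (k/(2(k − 1)))^m · ∫_{[0,∞)^k} (e₂(x))^m e^{−e₁(x)} dx, with the convention A_1(m) = 0. Then A_k(m + 1) − A_k(m) = ((k(k − 2))^{m+1} · ((k − 1)/2)_{m+1}) / ((k − 1)^{2(m+1)} · (k/2)_{m+1}) · A_{k−1}(m + 1). -/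

import Mathlib

open MeasureTheory Finset

/-- `e₁(x) = ∑ᵢ xᵢ` -/
noncomputable def e1 {k : ℕ} (x : Fin k → ℝ) : ℝ := ∑ i, x i

/-- `e₂(x) = ∑_{i<j} xᵢ xⱼ` -/
noncomputable def e2 {k : ℕ} (x : Fin k → ℝ) : ℝ := ∑ i, ∑ j ∈ Finset.Ioi i, x i * x j

/-- Pochhammer symbol `(y)ₘ = ∏_{i=0}^{m-1} (y + i)` -/
noncomputable def poch (y : ℝ) (m : ℕ) : ℝ := ∏ i ∈ Finset.range m, (y + i)

open MvPolynomial in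
/-- The integral of a polynomial against `exp (-e₁)` over the positive orthant, defined on
monomials by `x ^ d ↦ ∏ i, (d i)!`. -/
noncomputable def gammaFunctional (n : ℕ) : MvPolynomial (Fin n) ℝ →ₗ[ℝ] ℝ :=
  (basisMonomials (Fin n) ℝ).constr ℝ fun d => ∏ i, ((d i).factorial : ℝ)

open MvPolynomial in
/-- The polynomial `(p₁² - p₂) / 2`, which evaluates to `e₂`. -/
noncomputable def e2Poly (n : ℕ) : MvPolynomial (Fin n) ℝ :=
  C (1 / 2) * ((∑ i, X i) ^ 2 - ∑ i, X i ^ 2)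

section GammaFunctional

open MvPolynomial

theorem gammaFunctional_monomial {n : ℕ} (d : Fin n →₀ ℕ) (r : ℝ) :
    gammaFunctional n (monomial d r) = r * ∏ i, ((d i).factorial : ℝ) := by
  have h : monomial d r = r • basisMonomials (Fin n) ℝ d := by
    simp [coe_basisMonomials, smul_monomial]
  rw [h, map_smul, gammaFunctional, Module.Basis.constr_basis, smul_eq_mul]

theorem gammaFunctional_pderiv {n : ℕ} (i : Fin (n + 1)) (p : MvPolynomial (Fin (n + 1)) ℝ) :
    gammaFunctional (n + 1) (pderiv i p) = gammaFunctional (n + 1) p -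
      gammaFunctional n (aeval (i.insertNth (α := fun _ => MvPolynomial (Fin n) ℝ) 0 X) p) := by
  induction p using MvPolynomial.induction_on' with
  | add p q hp hq => simp only [map_add, hp, hq]; ring
  | monomial d r =>
    rw [pderiv_monomial, gammaFunctional_monomial, gammaFunctional_monomial, aeval_monomial,
      Finsupp.prod_fintype _ _ (fun i => pow_zero _), Fin.prod_univ_succAbove _ i,
      Fin.prod_univ_succAbove _ i, Fin.prod_univ_succAbove _ i]
    have hne : ∀ j, i.succAbove j ≠ i := fun j => i.succAbove_ne j
    have hs : ∀ j, (Finsupp.single i 1 : Fin (n + 1) →₀ ℕ) (i.succAbove j) = 0 := fun j =>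
      Finsupp.single_eq_of_ne (hne j)
    simp only [Fin.insertNth_apply_same, Fin.insertNth_apply_succAbove, Finsupp.coe_tsub,
      Pi.sub_apply, Finsupp.single_eq_same, hs, tsub_zero]
    rcases Nat.eq_zero_or_pos (d i) with h | h
    · have hX : ∏ j, (X j : MvPolynomial (Fin n) ℝ) ^ d (i.succAbove j) =
          monomial (Finsupp.equivFunOnFinite.symm fun j => d (i.succAbove j)) 1 := by
        rw [monomial_eq, Finsupp.prod_fintype _ _ (fun i => pow_zero _)]
        simp
      rw [h, hX, pow_zero, one_mul, algebraMap_eq, C_mul_monomial, gammaFunctional_monomial]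
      simp
    · obtain ⟨a, ha⟩ := Nat.exists_eq_succ_of_ne_zero h.ne'
      rw [ha, zero_pow (Nat.succ_ne_zero a)]
      simp [Nat.factorial_succ]
      ring

theorem gammaFunctional_X_mul {n : ℕ} (i : Fin n) (p : MvPolynomial (Fin n) ℝ) :
    gammaFunctional n (X i * p) = gammaFunctional n p + gammaFunctional n (X i * pderiv i p) := by
  cases n with
  | zero => exact i.elim0
  | succ n =>
    have h := gammaFunctional_pderiv i (X i * p)
    rw [Derivation.leibniz, pderiv_X_self, map_mul (aeval _), aeval_X, Fin.insertNth_apply_same, zero_mul,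
      map_zero, sub_zero, smul_eq_mul, smul_eq_mul, mul_one, map_add] at h
    linarith

theorem gammaFunctional_sum_X_mul {n d : ℕ} {p : MvPolynomial (Fin n) ℝ}
    (hp : p.IsHomogeneous d) :
    gammaFunctional n ((∑ i, X i) * p) = (n + d) * gammaFunctional n p := by
  rw [Finset.sum_mul, map_sum]
  simp only [gammaFunctional_X_mul _ p]
  rw [Finset.sum_add_distrib, ← map_sum (gammaFunctional n) (fun i => X i * pderiv i p),
    hp.sum_X_mul_pderiv, map_nsmul]
  simp
  ring

theorem e2Poly_isHomogeneous (n : ℕ) : (e2Poly n).IsHomogeneous 2 := by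
  have h1 : (∑ i : Fin n, (X i : MvPolynomial (Fin n) ℝ)).IsHomogeneous 1 :=
    IsHomogeneous.sum _ _ _ fun i _ => isHomogeneous_X ℝ i
  have h2 : (∑ i : Fin n, (X i : MvPolynomial (Fin n) ℝ) ^ 2).IsHomogeneous 2 :=
    IsHomogeneous.sum _ _ _ fun i _ => (isHomogeneous_X ℝ i).pow 2
  simpa [e2Poly] using (isHomogeneous_C (Fin n) (1 / 2 : ℝ)).mul ((h1.pow 2).sub h2)

theorem pderiv_e2Poly {n : ℕ} (i : Fin n) : pderiv i (e2Poly n) = ∑ j, X j - X i := by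
  have h1 : pderiv i (∑ j, (X j : MvPolynomial (Fin n) ℝ)) = 1 := by
    simp [map_sum, pderiv_X, Pi.single_apply]
  have h2 : pderiv i (∑ j, (X j : MvPolynomial (Fin n) ℝ) ^ 2) = 2 * X i := by
    simp [map_sum, pderiv_X, Pi.single_apply]
  have h3 : (C (1 / 2) : MvPolynomial (Fin n) ℝ) * 2 = 1 := by
    rw [← map_ofNat C 2, ← map_mul]; norm_num
  rw [e2Poly, pderiv_C_mul, map_sub, pderiv_pow, h1, h2]
  push_cast
  linear_combination (∑ j, X j - X i) * h3

theorem aeval_insertNth_e2Poly {n : ℕ} (i : Fin (n + 1)) :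
    aeval (i.insertNth (α := fun _ => MvPolynomial (Fin n) ℝ) 0 X) (e2Poly (n + 1)) =
      e2Poly n := by
  simp [e2Poly, Fin.sum_univ_succAbove _ i]

theorem gammaFunctional_e2Poly_pow_succ (n m : ℕ) :
    (n + 1) * gammaFunctional (n + 1) (e2Poly (n + 1) ^ (m + 1)) =
      (m + 1) * n * (n + 1 + 2 * m) * gammaFunctional (n + 1) (e2Poly (n + 1) ^ m) +
        (n + 1) * gammaFunctional n (e2Poly n ^ (m + 1)) := by
  have key : ∑ i, gammaFunctional (n + 1) (pderiv i (e2Poly (n + 1) ^ (m + 1))) =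
      (m + 1) * n * (n + 1 + 2 * m) * gammaFunctional (n + 1) (e2Poly (n + 1) ^ m) := by
    have hsum : ∑ i, pderiv i (e2Poly (n + 1) ^ (m + 1)) =
        (((m + 1) * n : ℕ) : ℝ) • ((∑ i, X i) * e2Poly (n + 1) ^ m) := by
      simp only [pderiv_pow, pderiv_e2Poly, ← Finset.mul_sum, Finset.sum_sub_distrib,
        Finset.sum_const, Finset.card_univ, Fintype.card_fin, smul_eq_C_mul, nsmul_eq_mul,
        add_tsub_cancel_right, map_natCast]
      push_cast
      ring
    rw [← map_sum, hsum, map_smul,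
      gammaFunctional_sum_X_mul ((e2Poly_isHomogeneous (n + 1)).pow m), smul_eq_mul]
    push_cast
    ring
  simp only [gammaFunctional_pderiv, map_pow, aeval_insertNth_e2Poly] at key
  simp only [Finset.sum_const, Finset.card_univ, Fintype.card_fin, nsmul_eq_mul] at key
  push_cast at key
  linarith

theorem integrable_pow_mul_exp_neg (a : ℕ) :
    Integrable (fun t : ℝ => t ^ a * Real.exp (-t)) (volume.restrict (Set.Ici 0)) := by
  have h := Real.GammaIntegral_convergent (s := a + 1) (by positivity)
  simp only [add_sub_cancel_right, Real.rpow_natCast] at h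
  rw [← IntegrableOn, integrableOn_Ici_iff_integrableOn_Ioi]
  simpa only [mul_comm] using h

theorem integral_pow_mul_exp_neg (a : ℕ) :
    ∫ t in Set.Ici (0 : ℝ), t ^ a * Real.exp (-t) = a.factorial := by
  have h := Real.Gamma_eq_integral (s := a + 1) (by positivity)
  simp only [add_sub_cancel_right, Real.rpow_natCast, Real.Gamma_nat_eq_factorial] at h
  rw [integral_Ici_eq_integral_Ioi, h]
  simp only [mul_comm]

theorem eval_monomial_mul_exp_neg_e1 {n : ℕ} (d : Fin n →₀ ℕ) (r : ℝ) (x : Fin n → ℝ) :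
    eval x (monomial d r) * Real.exp (-(e1 x)) =
      r * ∏ i, (x i ^ d i * Real.exp (-(x i))) := by
  rw [eval_monomial, Finsupp.prod_fintype _ _ (fun i => pow_zero _), e1,
    ← Finset.sum_neg_distrib, Real.exp_sum, Finset.prod_mul_distrib, mul_assoc]

theorem integrable_eval_mul_exp_neg_e1 {n : ℕ} (p : MvPolynomial (Fin n) ℝ) :
    Integrable (fun x : Fin n → ℝ => eval x p * Real.exp (-(e1 x)))
      (volume.restrict (Set.univ.pi fun _ => Set.Ici (0 : ℝ))) := by
  induction p using MvPolynomial.induction_on' with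
  | add p q hp hq =>
    simp only [map_add, add_mul]
    exact hp.add hq
  | monomial d r =>
    simp only [eval_monomial_mul_exp_neg_e1]
    rw [volume_pi, Measure.restrict_pi_pi]
    exact (Integrable.fintype_prod fun i => integrable_pow_mul_exp_neg (d i)).const_mul r

theorem integral_eval_mul_exp_neg_e1 {n : ℕ} (p : MvPolynomial (Fin n) ℝ) :
    ∫ x : Fin n → ℝ in Set.univ.pi fun _ => Set.Ici (0 : ℝ), eval x p * Real.exp (-(e1 x)) =
      gammaFunctional n p := by
  induction p using MvPolynomial.induction_on' with
  | add p q hp hq =>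
    simp only [map_add, add_mul]
    rw [integral_add (integrable_eval_mul_exp_neg_e1 p) (integrable_eval_mul_exp_neg_e1 q), hp, hq]
  | monomial d r =>
    simp only [eval_monomial_mul_exp_neg_e1]
    rw [gammaFunctional_monomial, integral_const_mul, volume_pi, Measure.restrict_pi_pi,
      integral_fintype_prod_eq_prod (fun i (t : ℝ) => t ^ d i * Real.exp (-t))]
    simp only [integral_pow_mul_exp_neg]

theorem two_mul_e2 {n : ℕ} (x : Fin n → ℝ) : 2 * e2 x = (∑ i, x i) ^ 2 - ∑ i, x i ^ 2 := by
  induction n with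
  | zero => simp [e2]
  | succ n ih =>
    have h := ih fun i => x i.succ
    simp only [e2, Fin.sum_univ_succ, Fin.sum_Ioi_zero, Fin.sum_Ioi_succ, ← Finset.mul_sum] at h ⊢
    linear_combination h

theorem eval_e2Poly {n : ℕ} (x : Fin n → ℝ) : eval x (e2Poly n) = e2 x := by
  have h := two_mul_e2 x
  simp only [e2Poly, map_mul, map_sub, map_pow, map_sum, eval_C, eval_X]
  linarith

theorem integral_e2_pow_mul_exp_neg_e1 (n m : ℕ) :
    ∫ x : Fin n → ℝ in Set.univ.pi fun _ => Set.Ici (0 : ℝ), e2 x ^ m * Real.exp (-(e1 x)) =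
      gammaFunctional n (e2Poly n ^ m) := by
  rw [← integral_eval_mul_exp_neg_e1]
  simp only [map_pow, eval_e2Poly]

end GammaFunctional

theorem poch_pos {y : ℝ} (hy : 0 < y) (m : ℕ) : 0 < poch y m :=
  Finset.prod_pos fun i _ => by positivity

theorem poch_succ (y : ℝ) (m : ℕ) : poch y (m + 1) = poch y m * (y + m) :=
  Finset.prod_range_succ _ _

theorem stmt6 (k m : ℕ) (hk : 2 ≤ k) (A : ℕ → ℕ → ℝ)
    (hA1 : ∀ m' : ℕ, A 1 m' = 0)
    (hA : ∀ k' m' : ℕ, 2 ≤ k' →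
      A k' m' =
        1 / ((m'.factorial : ℝ) * poch ((k' : ℝ) / 2) m') *
          ((k' : ℝ) / (2 * ((k' : ℝ) - 1))) ^ m' *
          ∫ x : Fin k' → ℝ in Set.univ.pi fun _ => Set.Ici (0 : ℝ),
            e2 x ^ m' * Real.exp (-(e1 x))) :
    A k (m + 1) - A k m =
      ((k * (k - 2) : ℕ) : ℝ) ^ (m + 1) * poch (((k - 1 : ℕ) : ℝ) / 2) (m + 1) /
          (((k - 1 : ℕ) : ℝ) ^ (2 * (m + 1)) * poch ((k : ℝ) / 2) (m + 1)) *
        A (k - 1) (m + 1) := by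
  obtain ⟨n, rfl⟩ : ∃ n, k = n + 2 := ⟨k - 2, by omega⟩
  have hrec := gammaFunctional_e2Poly_pow_succ (n + 1) m
  have hP := poch_pos (y := ((n + 2 : ℕ) : ℝ) / 2) (by positivity) m
  rw [hA _ _ hk, hA _ _ hk, integral_e2_pow_mul_exp_neg_e1, integral_e2_pow_mul_exp_neg_e1,
    poch_succ, Nat.factorial_succ]
  set P := poch (((n + 2 : ℕ) : ℝ) / 2) m
  set G := gammaFunctional (n + 1 + 1) (e2Poly (n + 1 + 1) ^ (m + 1))
  set H := gammaFunctional (n + 1 + 1) (e2Poly (n + 1 + 1) ^ m)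
  have hk1 : n + 2 - 1 = n + 1 := rfl
  have hk2 : n + 2 - 2 = n := rfl
  rw [hk1, hk2]
  have hn1 : (((n + 2 : ℕ) : ℝ) - 1) = n + 1 := by push_cast; ring
  rw [hn1]
  set K := gammaFunctional (n + 1) (e2Poly (n + 1) ^ (m + 1)) with hK
  set a : ℝ := ((n + 2 : ℕ) : ℝ) / (2 * (n + 1)) with ha
  set D : ℝ := ((m + 1 : ℕ) : ℝ) * m.factorial * (P * (((n + 2 : ℕ) : ℝ) / 2 + m)) with hD
  have hlhs : 1 / D * a ^ (m + 1) * G - 1 / (m.factorial * P) * a ^ m * H =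
      a ^ (m + 1) * K / D := by
    have hG : (n + 2 : ℝ) * G =
        (m + 1) * (n + 1) * (n + 2 + 2 * m) * H + (n + 2) * K := by
      push_cast at hrec
      linear_combination hrec
    have hDH : 1 / (m.factorial * P) * a ^ m * H =
        a ^ m * ((m + 1) * ((n + 2) / 2 + m) * H) / D := by
      rw [hD]
      push_cast
      have : ((n : ℝ) + 2) / 2 + m ≠ 0 := by positivity
      field_simp
    have haG : a * G - (m + 1) * ((n + 2) / 2 + m) * H = a * K := by
      rw [ha]
      push_cast
      field_simp
      linear_combination hG
    rw [hDH, pow_succ]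
    linear_combination a ^ m / D * haG
  rw [Nat.cast_mul (m + 1), hlhs]
  rcases Nat.eq_zero_or_pos n with rfl | hn
  · have hK0 : K = 0 := by simp [hK, e2Poly]
    simp [hK0]
  · have hP' := poch_pos (y := ((n + 1 : ℕ) : ℝ) / 2) (by positivity) (m + 1)
    rw [hA _ _ (by omega), integral_e2_pow_mul_exp_neg_e1, ← hK, Nat.factorial_succ]
    set P' := poch (((n + 1 : ℕ) : ℝ) / 2) (m + 1)
    have hpow : a ^ (m + 1) = (((n + 2) * n : ℕ) : ℝ) ^ (m + 1) /
        ((n + 1 : ℕ) : ℝ) ^ (2 * (m + 1)) *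
          (((n + 1 : ℕ) : ℝ) / (2 * (((n + 1 : ℕ) : ℝ) - 1))) ^ (m + 1) := by
      rw [pow_mul, ← div_pow, ← mul_pow, ha]
      push_cast
      rw [add_sub_cancel_right]
      field_simp
    rw [hpow, hD]
    push_cast
    field_simp
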